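/- arXiv:1506.02789 — 6 statements merged into one kernel-verified Lean document; each statement's English description precedes it below -/
import Mathlib

section
/- Let (Ω, ℱ, P) be a probability space and let u ∈ 𝒞 with growth constants C_u, m_u. For each k ∈ ℕ let Γ_k be a set, and for i = 1, 2 and each γ ∈ Γ_k let (W^i(k,γ), φ^i(k,γ), S^i(k,γ)) be a D-valued random variable. Assume there exist m₁, m₂, m₃ > 0 such that lim_{k→∞} sup_{γ∈Γ_k} E[|W¹(k,γ) − W²(k,γ)|^{m₁} + |φ¹(k,γ) − φ²(k,γ)|^{m₂} + |S¹(k,γ) − S²(k,γ)|^{m₃}] = 0, and there exists m₄ > m_u such that Σ_{i=1}^{2} sup_{k∈ℕ} sup_{γ∈Γ_k} E[|W^i(k,γ)|^{m₄} + (S^i(k,γ))^{m₄}] < ∞. Then lim_{k→∞} sup_{γ∈Γ_k} |E[u(W¹(k,γ), φ¹(k,γ), S¹(k,γ))] − E[u(W²(k,γ), φ²(k,γ), S²(k,γ))]| = 0. -/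
open MeasureTheory Filter Set

/-- Membership in the class 𝒞 of utility functions on
`D = ℝ × [0,Φ₀] × [0,∞)`: non-negative, continuous on `D`, non-decreasing in
each of the three variables, and of polynomial growth with constants `Cu, mu`. -/
structure MemC (Φ₀ : ℝ) (u : ℝ → ℝ → ℝ → ℝ) (Cu mu : ℝ) : Prop where
  nonneg : ∀ w φ s, φ ∈ Set.Icc 0 Φ₀ → 0 ≤ s → 0 ≤ u w φ s
  continuousOn : ContinuousOn (fun p : ℝ × ℝ × ℝ => u p.1 p.2.1 p.2.2)
    {p : ℝ × ℝ × ℝ | p.2.1 ∈ Set.Icc 0 Φ₀ ∧ 0 ≤ p.2.2}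
  mono_w : ∀ w₁ w₂ φ s, w₁ ≤ w₂ → φ ∈ Set.Icc 0 Φ₀ → 0 ≤ s → u w₁ φ s ≤ u w₂ φ s
  mono_phi : ∀ w φ₁ φ₂ s, φ₁ ≤ φ₂ → φ₁ ∈ Set.Icc 0 Φ₀ → φ₂ ∈ Set.Icc 0 Φ₀ → 0 ≤ s →
    u w φ₁ s ≤ u w φ₂ s
  mono_s : ∀ w φ s₁ s₂, s₁ ≤ s₂ → φ ∈ Set.Icc 0 Φ₀ → 0 ≤ s₁ → u w φ s₁ ≤ u w φ s₂
  growth : ∀ w φ s, φ ∈ Set.Icc 0 Φ₀ → 0 ≤ s → u w φ s ≤ Cu * (1 + |w| ^ mu + s ^ mu)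


lemma aux_pointwise (Φ₀ : ℝ) (u : ℝ → ℝ → ℝ → ℝ) (Cu mu : ℝ) (hCu : 0 < Cu) (hmu : 0 < mu)
    (hu : MemC Φ₀ u Cu mu) (m₁ m₂ m₃ : ℝ) (hm₁ : 0 < m₁) (hm₂ : 0 < m₂) (hm₃ : 0 < m₃)
    (m₄ : ℝ) (hm₄ : mu < m₄) (ε : ℝ) (hε : 0 < ε) :
    ∃ C : ℝ, 0 ≤ C ∧ ∀ w₁ φ₁ s₁ w₂ φ₂ s₂ : ℝ, φ₁ ∈ Set.Icc 0 Φ₀ → φ₂ ∈ Set.Icc 0 Φ₀ →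
      0 ≤ s₁ → 0 ≤ s₂ →
      |u w₁ φ₁ s₁ - u w₂ φ₂ s₂| ≤
        ε * (1 + (|w₁| ^ m₄ + s₁ ^ m₄) + (|w₂| ^ m₄ + s₂ ^ m₄)) +
        C * (|w₁ - w₂| ^ m₁ + |φ₁ - φ₂| ^ m₂ + |s₁ - s₂| ^ m₃) := by
  have hev : ∀ᶠ x : ℝ in atTop, x ^ (-(m₄ - mu)) < ε / (6 * Cu) :=
    (tendsto_rpow_neg_atTop (sub_pos.2 hm₄)).eventually (gt_mem_nhds (by positivity))
  obtain ⟨R₀, hR₀⟩ := eventually_atTop.1 hev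
  obtain ⟨R, hRR, hR1⟩ : ∃ R, R₀ ≤ R ∧ 1 ≤ R := ⟨max R₀ 1, le_max_left _ _, le_max_right _ _⟩
  have hbd : ∀ r, 1 ≤ r → ∀ w₁ φ₁ s₁ w₂ φ₂ s₂ : ℝ, φ₁ ∈ Set.Icc 0 Φ₀ → φ₂ ∈ Set.Icc 0 Φ₀ →
      0 ≤ s₁ → 0 ≤ s₂ → |w₁| ≤ r → s₁ ≤ r → |w₂| ≤ r → s₂ ≤ r →
      |u w₁ φ₁ s₁ - u w₂ φ₂ s₂| ≤ 6 * Cu * r ^ mu := by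
    intro r hr w₁ φ₁ s₁ w₂ φ₂ s₂ hφ₁ hφ₂ hs₁ hs₂ h1 h2 h3 h4
    have a1 := Real.rpow_le_rpow (abs_nonneg _) h1 hmu.le
    have a2 := Real.rpow_le_rpow hs₁ h2 hmu.le
    have a3 := Real.rpow_le_rpow (abs_nonneg _) h3 hmu.le
    have a4 := Real.rpow_le_rpow hs₂ h4 hmu.le
    have a5 : 1 ≤ r ^ mu := Real.one_le_rpow hr hmu.le
    have b1 := hu.growth w₁ φ₁ s₁ hφ₁ hs₁
    have b2 := hu.growth w₂ φ₂ s₂ hφ₂ hs₂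
    have c1 := hu.nonneg w₁ φ₁ s₁ hφ₁ hs₁
    have c2 := hu.nonneg w₂ φ₂ s₂ hφ₂ hs₂
    have d1 : Cu * (1 + |w₁| ^ mu + s₁ ^ mu) ≤ Cu * (3 * r ^ mu) := by gcongr; linarith
    have d2 : Cu * (1 + |w₂| ^ mu + s₂ ^ mu) ≤ Cu * (3 * r ^ mu) := by gcongr; linarith
    rw [abs_le]; constructor <;> nlinarith
  have hK : IsCompact (Set.Icc (-R) R ×ˢ (Set.Icc 0 Φ₀ ×ˢ Set.Icc 0 R) : Set (ℝ × ℝ × ℝ)) :=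
    isCompact_Icc.prod (isCompact_Icc.prod isCompact_Icc)
  have huc := hK.uniformContinuousOn_of_continuous (hu.continuousOn.mono (by
    rintro ⟨a, b, c⟩ ⟨_, h2, h3⟩
    exact ⟨h2, h3.1⟩))
  obtain ⟨δ, hδ, hδu⟩ := Metric.uniformContinuousOn_iff.1 huc ε hε
  set c := min (δ ^ m₁) (min (δ ^ m₂) (δ ^ m₃)) with hc
  have hcpos : 0 < c := by
    rw [hc]; exact lt_min (by positivity) (lt_min (by positivity) (by positivity))
  have hR0 : 0 < R := by linarith
  refine ⟨6 * Cu * R ^ mu / c, by positivity, ?_⟩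
  intro w₁ φ₁ s₁ w₂ φ₂ s₂ hφ₁ hφ₂ hs₁ hs₂
  have n1 : 0 ≤ |w₁| ^ m₄ := by positivity
  have n2 : 0 ≤ s₁ ^ m₄ := by positivity
  have n3 : 0 ≤ |w₂| ^ m₄ := by positivity
  have n4 : 0 ≤ s₂ ^ m₄ := by positivity
  have k1 : 0 ≤ |w₁ - w₂| ^ m₁ := by positivity
  have k2 : 0 ≤ |φ₁ - φ₂| ^ m₂ := by positivity
  have k3 : 0 ≤ |s₁ - s₂| ^ m₃ := by positivity
  have hA : 0 ≤ ε * (1 + (|w₁| ^ m₄ + s₁ ^ m₄) + (|w₂| ^ m₄ + s₂ ^ m₄)) := by positivity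
  have hA' : ε ≤ ε * (1 + (|w₁| ^ m₄ + s₁ ^ m₄) + (|w₂| ^ m₄ + s₂ ^ m₄)) :=
    le_mul_of_one_le_right hε.le (by linarith)
  have hB : 0 ≤ 6 * Cu * R ^ mu / c * (|w₁ - w₂| ^ m₁ + |φ₁ - φ₂| ^ m₂ + |s₁ - s₂| ^ m₃) := by
    positivity
  obtain ⟨r, hr, h1, h2, h3, h4⟩ : ∃ r, (r = |w₁| ∨ r = s₁ ∨ r = |w₂| ∨ r = s₂) ∧
      |w₁| ≤ r ∧ s₁ ≤ r ∧ |w₂| ≤ r ∧ s₂ ≤ r := by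
    refine ⟨max (max |w₁| s₁) (max |w₂| s₂), ?_, by simp, by simp, by simp, by simp⟩
    rcases max_choice (max |w₁| s₁) (max |w₂| s₂) with h | h <;> rw [h]
    · rcases max_choice |w₁| s₁ with h | h <;> rw [h] <;> simp
    · rcases max_choice |w₂| s₂ with h | h <;> rw [h] <;> simp
  rcases le_or_gt r R with hrR | hrR
  · by_cases hd : |w₁ - w₂| < δ ∧ |φ₁ - φ₂| < δ ∧ |s₁ - s₂| < δ
    · have := hδu (w₁, φ₁, s₁) ⟨abs_le.1 (h1.trans hrR), hφ₁, hs₁, h2.trans hrR⟩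
        (w₂, φ₂, s₂) ⟨abs_le.1 (h3.trans hrR), hφ₂, hs₂, h4.trans hrR⟩
        (by simp only [Prod.dist_eq, Real.dist_eq]; exact max_lt hd.1 (max_lt hd.2.1 hd.2.2))
      simp only [Real.dist_eq] at this
      linarith
    · have hcs : c ≤ |w₁ - w₂| ^ m₁ + |φ₁ - φ₂| ^ m₂ + |s₁ - s₂| ^ m₃ := by
        have e1 : c ≤ δ ^ m₁ := min_le_left _ _
        have e2 : c ≤ δ ^ m₂ := (min_le_right _ _).trans (min_le_left _ _)
        have e3 : c ≤ δ ^ m₃ := (min_le_right _ _).trans (min_le_right _ _)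
        by_contra hlt
        push Not at hlt
        apply hd
        refine ⟨?_, ?_, ?_⟩
        · exact lt_of_not_ge fun h => by
            have := Real.rpow_le_rpow hδ.le h hm₁.le
            linarith
        · exact lt_of_not_ge fun h => by
            have := Real.rpow_le_rpow hδ.le h hm₂.le
            linarith
        · exact lt_of_not_ge fun h => by
            have := Real.rpow_le_rpow hδ.le h hm₃.le
            linarith
      have := hbd R hR1 w₁ φ₁ s₁ w₂ φ₂ s₂ hφ₁ hφ₂ hs₁ hs₂ (h1.trans hrR) (h2.trans hrR)
        (h3.trans hrR) (h4.trans hrR)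
      have h6 : 6 * Cu * R ^ mu ≤ 6 * Cu * R ^ mu / c *
          (|w₁ - w₂| ^ m₁ + |φ₁ - φ₂| ^ m₂ + |s₁ - s₂| ^ m₃) := by
        calc 6 * Cu * R ^ mu = 6 * Cu * R ^ mu / c * c := by field_simp
          _ ≤ _ := by gcongr
      linarith
  · have hr0 : 0 < r := by linarith
    have := hbd r (by linarith) w₁ φ₁ s₁ w₂ φ₂ s₂ hφ₁ hφ₂ hs₁ hs₂ h1 h2 h3 h4
    have h5 := hR₀ r (by linarith)
    have h6 : 6 * Cu * r ^ mu ≤ ε * r ^ m₄ := by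
      have : r ^ mu = r ^ (-(m₄ - mu)) * r ^ m₄ := by
        rw [← Real.rpow_add hr0]; ring_nf
      rw [this, ← mul_assoc]
      have h7 := (lt_div_iff₀ (by positivity : (0:ℝ) < 6 * Cu)).1 h5
      gcongr
      linarith
    have h8 : r ^ m₄ ≤ 1 + (|w₁| ^ m₄ + s₁ ^ m₄) + (|w₂| ^ m₄ + s₂ ^ m₄) := by
      rcases hr with h | h | h | h <;> rw [h] <;> linarith
    have h9 := mul_le_mul_of_nonneg_left h8 hε.le
    linarith

lemma aux_integrable {Ω : Type*} [MeasurableSpace Ω] (P : Measure Ω) [IsProbabilityMeasure P]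
    (Φ₀ : ℝ) (u : ℝ → ℝ → ℝ → ℝ) (Cu mu : ℝ) (hCu : 0 < Cu) (hmu : 0 < mu)
    (hu : MemC Φ₀ u Cu mu) (W F S : Ω → ℝ) (hW : Measurable W) (hF : Measurable F)
    (hS : Measurable S) (hD : ∀ ω, F ω ∈ Set.Icc 0 Φ₀ ∧ 0 ≤ S ω)
    (m₄ : ℝ) (hm₄ : mu < m₄) (hint : Integrable (fun ω => |W ω| ^ m₄ + (S ω) ^ m₄) P) :
    Integrable (fun ω => u (W ω) (F ω) (S ω)) P := by
  have hmeas : Measurable (fun ω => u (W ω) (F ω) (S ω)) := by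
    have h1 := (continuousOn_iff_continuous_domRestrict.1 hu.continuousOn).measurable
    have h2 : Measurable (fun ω => (⟨(W ω, F ω, S ω), hD ω⟩ :
        {p : ℝ × ℝ × ℝ | p.2.1 ∈ Set.Icc 0 Φ₀ ∧ 0 ≤ p.2.2})) :=
      (hW.prodMk (hF.prodMk hS)).subtype_mk
    exact h1.comp h2
  have hx : ∀ x : ℝ, 0 ≤ x → x ^ mu ≤ 1 + x ^ m₄ := by
    intro x hx
    rcases le_total x 1 with h | h
    · have := Real.rpow_le_one hx h hmu.le
      have : 0 ≤ x ^ m₄ := by positivity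
      linarith
    · have := Real.rpow_le_rpow_of_exponent_le h hm₄.le
      linarith
  refine Integrable.mono' (((integrable_const (3 : ℝ)).add hint).const_mul Cu)
    hmeas.aestronglyMeasurable (ae_of_all _ fun ω => ?_)
  rw [Real.norm_eq_abs, abs_of_nonneg (hu.nonneg _ _ _ (hD ω).1 (hD ω).2)]
  refine (hu.growth _ _ _ (hD ω).1 (hD ω).2).trans ?_
  have a := hx _ (abs_nonneg (W ω))
  have b := hx _ (hD ω).2
  simp only [Pi.add_apply]
  refine mul_le_mul_of_nonneg_left ?_ hCu.le
  linarith

/-- Lemma 7.1 (lemm_conti_u): uniform convergence of expected utilities, given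
uniform convergence of moment-differences and a uniform moment bound of order
`m₄ > mu`. -/
theorem uniform_convergence_of_expected_utility
    {Ω : Type*} [MeasurableSpace Ω] (P : Measure Ω) [IsProbabilityMeasure P]
    (Φ₀ : ℝ) (hΦ₀ : 0 < Φ₀)
    (u : ℝ → ℝ → ℝ → ℝ) (Cu mu : ℝ) (hCu : 0 < Cu) (hmu : 0 < mu)
    (hu : MemC Φ₀ u Cu mu)
    (Γ : ℕ → Type*)
    (W φv S : (i : Fin 2) → (k : ℕ) → Γ k → Ω → ℝ)
    (hWmeas : ∀ i k γ, Measurable (W i k γ))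
    (hφmeas : ∀ i k γ, Measurable (φv i k γ))
    (hSmeas : ∀ i k γ, Measurable (S i k γ))
    -- the triplets are `D`-valued
    (hD : ∀ i k γ ω, φv i k γ ω ∈ Set.Icc 0 Φ₀ ∧ 0 ≤ S i k γ ω)
    (m₁ m₂ m₃ : ℝ) (hm₁ : 0 < m₁) (hm₂ : 0 < m₂) (hm₃ : 0 < m₃)
    (hdiff_int : ∀ k γ, Integrable (fun ω =>
      |W 0 k γ ω - W 1 k γ ω| ^ m₁ + |φv 0 k γ ω - φv 1 k γ ω| ^ m₂ +
        |S 0 k γ ω - S 1 k γ ω| ^ m₃) P)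
    -- lim_{k→∞} sup_{γ ∈ Γ_k} E[|W¹-W²|^{m₁} + |φ¹-φ²|^{m₂} + |S¹-S²|^{m₃}] = 0
    (hdiff : ∀ ε > (0 : ℝ), ∃ K : ℕ, ∀ k ≥ K, ∀ γ : Γ k,
      (∫ ω, (|W 0 k γ ω - W 1 k γ ω| ^ m₁ + |φv 0 k γ ω - φv 1 k γ ω| ^ m₂ +
        |S 0 k γ ω - S 1 k γ ω| ^ m₃) ∂P) ≤ ε)
    (m₄ : ℝ) (hm₄ : mu < m₄)
    (hmom_int : ∀ i k γ, Integrable (fun ω => |W i k γ ω| ^ m₄ + (S i k γ ω) ^ m₄) P)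
    -- Σᵢ sup_k sup_γ E[|Wⁱ|^{m₄} + (Sⁱ)^{m₄}] < ∞
    (M : ℝ) (hmom : ∀ i k γ, (∫ ω, (|W i k γ ω| ^ m₄ + (S i k γ ω) ^ m₄) ∂P) ≤ M) :
    -- lim_{k→∞} sup_{γ ∈ Γ_k} |E[u(W¹,φ¹,S¹)] − E[u(W²,φ²,S²)]| = 0
    ∀ ε > (0 : ℝ), ∃ K : ℕ, ∀ k ≥ K, ∀ γ : Γ k,
      |(∫ ω, u (W 0 k γ ω) (φv 0 k γ ω) (S 0 k γ ω) ∂P) -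
        (∫ ω, u (W 1 k γ ω) (φv 1 k γ ω) (S 1 k γ ω) ∂P)| ≤ ε := by
  intro ε hε
  obtain ⟨C, hC, hpt⟩ := aux_pointwise Φ₀ u Cu mu hCu hmu hu m₁ m₂ m₃ hm₁ hm₂ hm₃ m₄ hm₄
    (ε / (2 * (1 + 2 * |M|))) (by positivity)
  obtain ⟨K, hK⟩ := hdiff (ε / (2 * (C + 1))) (by positivity)
  refine ⟨K, fun k hk γ => ?_⟩
  have hI : ∀ i, Integrable (fun ω => u (W i k γ ω) (φv i k γ ω) (S i k γ ω)) P := fun i =>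
    aux_integrable P Φ₀ u Cu mu hCu hmu hu _ _ _ (hWmeas i k γ) (hφmeas i k γ) (hSmeas i k γ)
      (hD i k γ) m₄ hm₄ (hmom_int i k γ)
  rw [← integral_sub (hI 0) (hI 1)]
  refine abs_integral_le_integral_abs.trans ?_
  have i1 := ((integrable_const (μ := P) (1 : ℝ)).add (hmom_int 0 k γ)).add (hmom_int 1 k γ)
  have i2 := hdiff_int k γ
  refine (integral_mono ((hI 0).sub (hI 1)).abs
    ((i1.const_mul (ε / (2 * (1 + 2 * |M|)))).add (i2.const_mul C))
    (fun ω => hpt _ _ _ _ _ _ (hD 0 k γ ω).1 (hD 1 k γ ω).1 (hD 0 k γ ω).2 (hD 1 k γ ω).2)).trans ?_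
  rw [integral_add' (i1.const_mul _) (i2.const_mul _), integral_const_mul, integral_const_mul,
    integral_add' ((integrable_const (μ := P) (1 : ℝ)).add (hmom_int 0 k γ)) (hmom_int 1 k γ),
    integral_add' (integrable_const (μ := P) (1 : ℝ)) (hmom_int 0 k γ)]
  have a0 := (hmom 0 k γ).trans (le_abs_self M)
  have a1 := (hmom 1 k γ).trans (le_abs_self M)
  have a2 := hK k hk γ
  have b1 : (∫ _ω, (1 : ℝ) ∂P) = 1 := by simp
  rw [b1]
  have t1 : ε / (2 * (1 + 2 * |M|)) * (1 + (∫ ω, (|W 0 k γ ω| ^ m₄ + (S 0 k γ ω) ^ m₄) ∂P) +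
      ∫ ω, (|W 1 k γ ω| ^ m₄ + (S 1 k γ ω) ^ m₄) ∂P) ≤ ε / 2 := by
    calc _ ≤ ε / (2 * (1 + 2 * |M|)) * (1 + 2 * |M|) := by
          refine mul_le_mul_of_nonneg_left ?_ (by positivity)
          linarith
      _ = ε / 2 := by field_simp
  have t2 := mul_le_mul_of_nonneg_left a2 hC
  have t3 : C * (ε / (2 * (C + 1))) ≤ ε / 2 := by
    calc _ ≤ (C + 1) * (ε / (2 * (C + 1))) := by gcongr; linarith
      _ = ε / 2 := by field_simp
  linarith
end

section
/- Let h : [0,∞) → [0,∞) be a non-decreasing continuous function with lim_{ζ→∞} h(ζ) = ∞, let g(ζ) = ∫₀^ζ h(ζ′) dζ′, and let g⁻¹(y) := sup{ζ ≥ 0 : g(ζ) = y}. Fix γ̃ > 0 and Φ₀ > 0. Then for every measurable function ζ : [0,1] → [0,∞) with ∫₀^1 ζ(v) dv ≤ Φ₀, every r ∈ (0,1], and every R > 0, one has ∫₀^r exp(−γ̃ ∫₀^v g(ζ(v′)) dv′) · ζ(v) dv ≤ r · g⁻¹(R/(γ̃ r)) + Φ₀ e^{−R}. -/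
open Set Filter MeasureTheory

/-- The deterministic core of Lemma 7.5 (eval_0): for the driving process
`L_v = γ̃ v`, every admissible selling rate `ζ` with `∫₀^1 ζ ≤ Φ₀` satisfies
`∫₀^r exp(−γ̃ ∫₀^v g(ζ(v′)) dv′) ζ(v) dv ≤ r g⁻¹(R/(γ̃ r)) + Φ₀ e^{−R}`
for all `r ∈ (0,1]` and `R > 0`, where `g(ζ) = ∫₀^ζ h` and
`g⁻¹(y) = sup {ζ ≥ 0 : g(ζ) = y}`. -/
theorem discounted_proceeds_bound
    (h : ℝ → ℝ)
    (h_nonneg : ∀ ζ, 0 ≤ ζ → 0 ≤ h ζ)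
    (h_mono : MonotoneOn h (Set.Ici 0))
    (h_cont : ContinuousOn h (Set.Ici 0))
    (h_top : Tendsto h atTop atTop)
    (g : ℝ → ℝ) (hg : ∀ ζ, g ζ = ∫ z in (0:ℝ)..ζ, h z)
    (gInv : ℝ → ℝ) (hgInv : ∀ y, gInv y = sSup {ζ : ℝ | 0 ≤ ζ ∧ g ζ = y})
    (γt Φ₀ : ℝ) (hγt : 0 < γt) (hΦ₀ : 0 < Φ₀)
    (ζ : ℝ → ℝ) (hζ_meas : Measurable ζ) (hζ_nonneg : ∀ v, 0 ≤ ζ v)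
    (hζ_int : IntegrableOn ζ (Set.Icc 0 1))
    (hgζ_int : IntegrableOn (fun v => g (ζ v)) (Set.Icc 0 1))
    (hζ_tot : (∫ v in (0:ℝ)..1, ζ v) ≤ Φ₀)
    (r : ℝ) (hr : r ∈ Set.Ioc (0:ℝ) 1) (R : ℝ) (hR : 0 < R) :
    (∫ v in (0:ℝ)..r, Real.exp (-(γt * ∫ v' in (0:ℝ)..v, g (ζ v'))) * ζ v) ≤
      r * gInv (R / (γt * r)) + Φ₀ * Real.exp (-R) := by
  obtain ⟨hr0, hr1⟩ := hr
  have hII : ∀ a b, 0 ≤ a → 0 ≤ b → IntervalIntegrable h volume a b := by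
    intro a b ha hb
    apply ContinuousOn.intervalIntegrable
    apply h_cont.mono
    intro x hx
    exact (le_min ha hb).trans hx.1
  have hsub : ∀ a b, 0 ≤ a → 0 ≤ b → g b - g a = ∫ z in a..b, h z := by
    intro a b ha hb
    rw [hg, hg]
    exact intervalIntegral.integral_interval_sub_left (hII 0 b le_rfl hb) (hII 0 a le_rfl ha)
  have tang : ∀ a x, 0 ≤ a → 0 ≤ x → g a + h a * (x - a) ≤ g x := by
    intro a x ha hx
    rcases le_total a x with hax | hax
    · have h1 : (∫ _ in a..x, h a) ≤ ∫ z in a..x, h z :=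
        intervalIntegral.integral_mono_on hax (by simp) (hII a x ha hx)
          (fun z hz => h_mono ha (ha.trans hz.1) hz.1)
      rw [intervalIntegral.integral_const, smul_eq_mul, ← hsub a x ha hx] at h1
      linarith
    · have h1 : (∫ z in x..a, h z) ≤ ∫ _ in x..a, h a :=
        intervalIntegral.integral_mono_on hax (hII x a hx ha) (by simp)
          (fun z hz => h_mono (hx.trans hz.1) ha hz.2)
      rw [intervalIntegral.integral_const, smul_eq_mul, ← hsub x a hx ha] at h1
      linarith
  have g0 : g 0 = 0 := by rw [hg]; simp
  have gnn : ∀ x, 0 ≤ x → 0 ≤ g x := by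
    intro x hx
    have h1 := tang 0 x le_rfl hx
    have h2 := mul_nonneg (h_nonneg 0 le_rfl) hx
    rw [g0] at h1
    linarith
  set y := R / (γt * r) with hy
  have hypos : 0 < y := by positivity
  obtain ⟨M, hM0, hM⟩ : ∃ M, 0 ≤ M ∧ y ≤ h M :=
    ((eventually_ge_atTop (0:ℝ)).and (h_top.eventually_ge_atTop y)).exists
  have hgM : y ≤ g (M + 1) := by
    have h1 := tang M (M + 1) hM0 (by linarith)
    have h2 := gnn M hM0
    linarith
  have gcont : ContinuousOn g (Icc 0 (M + 1)) := by
    have h1 : IntegrableOn h (uIcc 0 (M + 1)) := by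
      rw [uIcc_of_le (by linarith)]
      exact (h_cont.mono Icc_subset_Ici_self).integrableOn_Icc
    have h2 := intervalIntegral.continuousOn_primitive_interval h1
    rw [uIcc_of_le (by linarith)] at h2
    exact h2.congr (fun x _ => hg x)
  obtain ⟨c, ⟨hc0, -⟩, hgc⟩ : ∃ c ∈ Icc 0 (M + 1), g c = y :=
    intermediate_value_Icc (by linarith) gcont ⟨by rw [g0]; exact hypos.le, hgM⟩
  have hych : y ≤ c * h c := by
    have h1 := tang c 0 hc0 le_rfl
    rw [g0, hgc] at h1
    linarith
  have hhc : 0 < h c := by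
    by_contra hneg
    have := mul_nonpos_of_nonneg_of_nonpos hc0 (not_lt.mp hneg)
    linarith
  have hcle : c ≤ gInv y := by
    rw [hgInv]
    refine le_csSup ⟨c, ?_⟩ ⟨hc0, hgc⟩
    rintro x ⟨hx0, hx⟩
    have h1 := tang c x hc0 hx0
    rw [hx, hgc] at h1
    by_contra hlt
    have := mul_pos hhc (sub_pos.mpr (not_le.mp hlt))
    linarith
  have hpt : ∀ x, 0 ≤ x → x ≤ (c - y / h c) + g x / h c := by
    intro x hx
    have h1 := tang c x hc0 hx
    rw [hgc] at h1
    have h2 : x - c ≤ (g x - y) / h c := by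
      rw [le_div_iff₀ hhc]; linarith
    rw [sub_div] at h2
    linarith
  have hcy : 0 ≤ c - y / h c := by
    rw [sub_nonneg, div_le_iff₀ hhc]; exact hych
  have gII : ∀ a b, a ∈ Icc (0:ℝ) 1 → b ∈ Icc (0:ℝ) 1 →
      IntervalIntegrable (fun v => g (ζ v)) volume a b := by
    intro a b ha hb
    exact (hgζ_int.mono_set (uIcc_subset_Icc ha hb)).intervalIntegrable
  have zII : ∀ a b, a ∈ Icc (0:ℝ) 1 → b ∈ Icc (0:ℝ) 1 →
      IntervalIntegrable ζ volume a b := by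
    intro a b ha hb
    exact (hζ_int.mono_set (uIcc_subset_Icc ha hb)).intervalIntegrable
  have m0 : (0:ℝ) ∈ Icc (0:ℝ) 1 := ⟨le_rfl, zero_le_one⟩
  have m1 : (1:ℝ) ∈ Icc (0:ℝ) 1 := ⟨zero_le_one, le_rfl⟩
  have mr : r ∈ Icc (0:ℝ) 1 := ⟨hr0.le, hr1⟩
  set A : ℝ → ℝ := fun v => γt * ∫ v' in (0:ℝ)..v, g (ζ v') with hA
  have Acont : ContinuousOn A (Icc 0 1) := by
    have h1 : IntegrableOn (fun v => g (ζ v)) (uIcc 0 1) := by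
      rwa [uIcc_of_le zero_le_one]
    have h2 := intervalIntegral.continuousOn_primitive_interval h1
    rw [uIcc_of_le zero_le_one] at h2
    exact continuousOn_const.mul h2
  have A0 : A 0 = 0 := by simp [hA]
  have Amono : ∀ a b, a ∈ Icc (0:ℝ) 1 → b ∈ Icc (0:ℝ) 1 → a ≤ b → A a ≤ A b := by
    intro a b ha hb hab
    have h1 := intervalIntegral.integral_interval_sub_left (gII 0 b m0 hb) (gII 0 a m0 ha)
    have h2 : 0 ≤ ∫ v in a..b, g (ζ v) :=
      intervalIntegral.integral_nonneg hab (fun v _ => gnn _ (hζ_nonneg v))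
    exact mul_le_mul_of_nonneg_left (by linarith) hγt.le
  obtain ⟨τ, hτ0, hτr, hτR, hτ⟩ : ∃ τ, 0 ≤ τ ∧ τ ≤ r ∧ A τ ≤ R ∧
      (∀ v, τ < v → v ≤ r → R ≤ A v) := by
    rcases le_total (A r) R with hle | hge
    · exact ⟨r, hr0.le, le_rfl, hle, fun v h1 h2 => absurd h1 (not_lt.mpr h2)⟩
    · obtain ⟨τ, ⟨h0, h1⟩, h2⟩ := intermediate_value_Icc hr0.le
        (Acont.mono (Icc_subset_Icc le_rfl hr1)) ⟨by rw [A0]; exact hR.le, hge⟩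
      refine ⟨τ, h0, h1, h2.le, fun v h3 h4 => ?_⟩
      rw [← h2]
      exact Amono τ v ⟨h0, h1.trans hr1⟩ ⟨h0.trans h3.le, h4.trans hr1⟩ h3.le
  have mτ : τ ∈ Icc (0:ℝ) 1 := ⟨hτ0, hτr.trans hr1⟩
  have fII : ∀ a b, a ∈ Icc (0:ℝ) 1 → b ∈ Icc (0:ℝ) 1 →
      IntervalIntegrable (fun v => Real.exp (-(A v)) * ζ v) volume a b := by
    intro a b ha hb
    apply (zII a b ha hb).continuousOn_mul
    exact (Real.continuous_exp.comp_continuousOn Acont.neg).mono (uIcc_subset_Icc ha hb)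
  have I1 : (∫ v in (0:ℝ)..τ, Real.exp (-(A v)) * ζ v) ≤ r * c := by
    have h1 : (∫ v in (0:ℝ)..τ, Real.exp (-(A v)) * ζ v) ≤
        ∫ v in (0:ℝ)..τ, ((c - y / h c) + g (ζ v) / h c) := by
      refine intervalIntegral.integral_mono_on hτ0 (fII 0 τ m0 mτ)
        (intervalIntegrable_const.add ((gII 0 τ m0 mτ).div_const _)) ?_
      intro v hv
      refine le_trans ?_ (hpt _ (hζ_nonneg v))
      apply mul_le_of_le_one_left (hζ_nonneg v)
      rw [Real.exp_le_one_iff, neg_nonpos, ← A0]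
      exact Amono 0 v m0 ⟨hv.1, hv.2.trans mτ.2⟩ hv.1
    rw [intervalIntegral.integral_add intervalIntegrable_const ((gII 0 τ m0 mτ).div_const _),
      intervalIntegral.integral_const, intervalIntegral.integral_div, smul_eq_mul, sub_zero] at h1
    have h2 : (∫ v in (0:ℝ)..τ, g (ζ v)) ≤ r * y := by
      have h3 : r * y = R / γt := by rw [hy]; field_simp
      rw [h3, le_div_iff₀ hγt, mul_comm]
      exact hτR
    have h4 := div_le_div_of_nonneg_right h2 hhc.le
    have h5 := mul_le_mul_of_nonneg_right hτr hcy
    have h6 : r * (c - y / h c) + r * y / h c = r * c := by ring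
    linarith
  have I2 : (∫ v in τ..r, Real.exp (-(A v)) * ζ v) ≤ Φ₀ * Real.exp (-R) := by
    have h1 : (∫ v in τ..r, Real.exp (-(A v)) * ζ v) ≤ ∫ v in τ..r, Real.exp (-R) * ζ v := by
      refine intervalIntegral.integral_mono_on_of_le_Ioo hτr (fII τ r mτ mr)
        ((zII τ r mτ mr).const_mul _) ?_
      intro v hv
      apply mul_le_mul_of_nonneg_right _ (hζ_nonneg v)
      exact Real.exp_le_exp.mpr (neg_le_neg (hτ v hv.1 hv.2.le))
    rw [intervalIntegral.integral_const_mul] at h1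
    have h2 : (∫ v in τ..r, ζ v) ≤ ∫ v in (0:ℝ)..1, ζ v :=
      intervalIntegral.integral_mono_interval hτ0 hτr hr1
        (Eventually.of_forall hζ_nonneg) (zII 0 1 m0 m1)
    have h3 := mul_le_mul_of_nonneg_left (h2.trans hζ_tot) (Real.exp_pos (-R)).le
    linarith
  have hsplit := intervalIntegral.integral_add_adjacent_intervals (fII 0 τ m0 mτ) (fII τ r mτ mr)
  have hfin := mul_le_mul_of_nonneg_left hcle hr0.le
  change (∫ v in (0:ℝ)..r, Real.exp (-(A v)) * ζ v) ≤ _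
  linarith
end

section
/- Let h : [0,∞) → [0,∞) be a non-decreasing continuous function with lim_{ζ→∞} h(ζ) = ∞, let g(ζ) = ∫₀^ζ h(ζ′) dζ′, let g⁻¹(y) := sup{ζ ≥ 0 : g(ζ) = y}, and fix γ̃ > 0. Define f(ζ) = ζ · √(h(ζ/2)), f⁻¹(y) := sup{ζ ≥ 0 : f(ζ) = y}, M(r) = f⁻¹(1/r), and R(r) = γ̃ r g(M(r)) for r ∈ (0,1]. Then R(r) → ∞ and r · g⁻¹(R(r)/(γ̃ r)) → 0 as r ↓ 0. -/
open Set Filter MeasureTheory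

/-- The construction verifying condition (cond_Rr) in the proof of Lemma 7.5
(eval_0): with `f(ζ) = ζ √(h(ζ/2))`, `M(r) = f⁻¹(1/r)` and
`R(r) = γ̃ r g(M(r))`, one has `R(r) → ∞` and `r g⁻¹(R(r)/(γ̃ r)) → 0` as
`r ↓ 0`. -/
theorem cond_Rr_construction
    (h : ℝ → ℝ)
    (h_nonneg : ∀ ζ, 0 ≤ ζ → 0 ≤ h ζ)
    (h_mono : MonotoneOn h (Set.Ici 0))
    (h_cont : ContinuousOn h (Set.Ici 0))
    (h_top : Tendsto h atTop atTop)
    (g : ℝ → ℝ) (hg : ∀ ζ, g ζ = ∫ z in (0:ℝ)..ζ, h z)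
    (gInv : ℝ → ℝ) (hgInv : ∀ y, gInv y = sSup {ζ : ℝ | 0 ≤ ζ ∧ g ζ = y})
    (γt : ℝ) (hγt : 0 < γt)
    (f : ℝ → ℝ) (hf : ∀ ζ, f ζ = ζ * Real.sqrt (h (ζ / 2)))
    (fInv : ℝ → ℝ) (hfInv : ∀ y, fInv y = sSup {ζ : ℝ | 0 ≤ ζ ∧ f ζ = y})
    (M : ℝ → ℝ) (hM : ∀ r, M r = fInv (1 / r))
    (R : ℝ → ℝ) (hR : ∀ r, R r = γt * r * g (M r)) :
    Tendsto R (nhdsWithin 0 (Set.Ioi 0)) atTop ∧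
    Tendsto (fun r => r * gInv (R r / (γt * r))) (nhdsWithin 0 (Set.Ioi 0)) (nhds 0) := by
  have key : ∀ a b, 0 ≤ a → a ≤ b → (b - a) * h a ≤ g b - g a := by
    intro a b ha hab
    have hi : ∀ x y, 0 ≤ x → x ≤ y → IntervalIntegrable h volume x y := by
      intro x y hx hxy
      apply ContinuousOn.intervalIntegrable_of_Icc hxy
      exact h_cont.mono (fun z hz => le_trans hx hz.1)
    rw [hg, hg, intervalIntegral.integral_interval_sub_left (hi 0 b le_rfl (ha.trans hab))
      (hi 0 a le_rfl ha)]
    have h1 : ∫ z in a..b, h a = (b - a) * h a := by simp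
    rw [← h1]
    apply intervalIntegral.integral_mono_on hab (by simp) (hi a b ha hab)
    intro x hx
    exact h_mono ha (le_trans ha hx.1) hx.1
  have g0 : g 0 = 0 := by simp [hg]
  have f0 : f 0 = 0 := by simp [hf]
  have sm : ∀ a b, 0 ≤ a → a ≤ b → Real.sqrt (h (a / 2)) ≤ Real.sqrt (h (b / 2)) := by
    intro a b ha hab
    apply Real.sqrt_le_sqrt
    apply h_mono
    · simp only [Set.mem_Ici]; linarith
    · simp only [Set.mem_Ici]; linarith
    · linarith
  have fm : ∀ a b, 0 ≤ a → a ≤ b → f a ≤ f b := by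
    intro a b ha hab
    rw [hf, hf]
    exact mul_le_mul hab (sm a b ha hab) (Real.sqrt_nonneg _) (ha.trans hab)
  have f_cont : ContinuousOn f (Set.Ici 0) := by
    have : f = fun ζ => ζ * Real.sqrt (h (ζ / 2)) := funext hf
    rw [this]
    apply continuousOn_id.mul
    apply ContinuousOn.sqrt
    apply h_cont.comp (by fun_prop)
    intro x hx
    simp only [Set.mem_Ici] at hx ⊢
    linarith
  have half : Tendsto (fun ζ : ℝ => ζ / 2) atTop atTop :=
    tendsto_id.atTop_div_const (by norm_num)
  have hhalf : Tendsto (fun ζ : ℝ => h (ζ / 2)) atTop atTop := h_top.comp half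
  have shalf : Tendsto (fun ζ : ℝ => Real.sqrt (h (ζ / 2))) atTop atTop :=
    Real.tendsto_sqrt_atTop.comp hhalf
  have Mspec : ∀ r, 0 < r → 0 < M r ∧ f (M r) = 1 / r := by
    intro r hr
    have hr' : 0 < 1 / r := by positivity
    obtain ⟨K, hK1, hK2, hK3⟩ := ((shalf.eventually_ge_atTop 1).and
      ((eventually_ge_atTop (1 / r)).and (eventually_ge_atTop 0))).exists
    have hfK : 1 / r ≤ f K := by rw [hf]; nlinarith
    obtain ⟨m, hm, hfm⟩ := intermediate_value_Icc hK3
      (f_cont.mono (fun z hz => hz.1)) (show 1 / r ∈ Set.Icc (f 0) (f K) from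
        ⟨by rw [f0]; exact hr'.le, hfK⟩)
    have hgr : IsGreatest {ζ : ℝ | 0 ≤ ζ ∧ f ζ = 1 / r} m := by
      refine ⟨⟨hm.1, hfm⟩, ?_⟩
      rintro ζ ⟨hζ, hfζ⟩
      by_contra hlt
      push Not at hlt
      have e1 := sm m ζ hm.1 hlt.le
      have p : 0 < m * Real.sqrt (h (m / 2)) := by rw [← hf, hfm]; exact hr'
      have p2 : 0 < Real.sqrt (h (m / 2)) := pos_of_mul_pos_right p hm.1
      have e2 : m * Real.sqrt (h (m / 2)) = ζ * Real.sqrt (h (ζ / 2)) := by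
        rw [← hf, ← hf, hfm, hfζ]
      nlinarith
    have hMm : M r = m := by rw [hM, hfInv, hgr.csSup_eq]
    rw [hMm]
    refine ⟨lt_of_le_of_ne hm.1 ?_, hfm⟩
    rintro rfl
    rw [f0] at hfm
    linarith
  have Mtop : Tendsto M (nhdsWithin 0 (Set.Ioi 0)) atTop := by
    rw [tendsto_atTop]
    intro K
    have ht : Tendsto (fun r : ℝ => r⁻¹) (nhdsWithin 0 (Set.Ioi 0)) atTop :=
      tendsto_inv_nhdsGT_zero
    filter_upwards [ht.eventually_gt_atTop (f K), self_mem_nhdsWithin] with r h1 hr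
    obtain ⟨h2, h3⟩ := Mspec r hr
    by_contra hlt
    push Not at hlt
    have := fm _ _ h2.le hlt.le
    rw [h3, one_div] at this
    linarith
  have S : Tendsto (fun r => Real.sqrt (h (M r / 2))) (nhdsWithin 0 (Set.Ioi 0)) atTop :=
    shalf.comp Mtop
  have rM : ∀ r, 0 < r → 0 < Real.sqrt (h (M r / 2)) ∧
      r * M r = (Real.sqrt (h (M r / 2)))⁻¹ := by
    intro r hr
    obtain ⟨h2, h3⟩ := Mspec r hr
    rw [hf] at h3
    have hr' : 0 < 1 / r := by positivity
    have p2 : 0 < Real.sqrt (h (M r / 2)) := pos_of_mul_pos_right (h3 ▸ hr') h2.le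
    refine ⟨p2, ?_⟩
    rw [eq_div_iff hr.ne'] at h3
    apply eq_inv_of_mul_eq_one_left
    linarith
  constructor
  · refine tendsto_atTop_mono' _ ?_ (S.const_mul_atTop (show 0 < γt / 2 by positivity))
    filter_upwards [self_mem_nhdsWithin] with r hr
    have hr : 0 < r := hr
    obtain ⟨h2, h3⟩ := Mspec r hr
    obtain ⟨p, e⟩ := rM r hr
    have k1 := key (M r / 2) (M r) (by linarith) (by linarith)
    have k2 := key 0 (M r / 2) le_rfl (by linarith)
    have k3 : 0 ≤ (M r / 2 - 0) * h 0 :=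
      mul_nonneg (by linarith) (h_nonneg 0 le_rfl)
    have k4 : M r / 2 * h (M r / 2) ≤ g (M r) := by
      rw [g0] at k2
      linarith
    have hs : Real.sqrt (h (M r / 2)) * Real.sqrt (h (M r / 2)) = h (M r / 2) :=
      Real.mul_self_sqrt (h_nonneg _ (by linarith))
    replace e : r * M r * Real.sqrt (h (M r / 2)) = 1 := by
      rw [e, inv_mul_cancel₀ p.ne']
    rw [hR]
    calc γt / 2 * Real.sqrt (h (M r / 2))
        = γt / 2 * (r * M r * Real.sqrt (h (M r / 2))) * Real.sqrt (h (M r / 2)) := by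
          rw [e, mul_one]
      _ = γt * r * (M r / 2 * (Real.sqrt (h (M r / 2)) * Real.sqrt (h (M r / 2)))) := by ring
      _ = γt * r * (M r / 2 * h (M r / 2)) := by rw [hs]
      _ ≤ γt * r * g (M r) := mul_le_mul_of_nonneg_left k4 (by positivity)
  · refine S.inv_tendsto_atTop.congr' ?_
    filter_upwards [self_mem_nhdsWithin] with r hr
    have hr : 0 < r := hr
    obtain ⟨h2, h3⟩ := Mspec r hr
    obtain ⟨p, e⟩ := rM r hr
    have hq : R r / (γt * r) = g (M r) := by
      rw [hR]
      field_simp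
    have hgr : IsGreatest {ζ : ℝ | 0 ≤ ζ ∧ g ζ = g (M r)} (M r) := by
      refine ⟨⟨h2.le, rfl⟩, ?_⟩
      rintro ζ ⟨hζ, hgζ⟩
      by_contra hlt
      push Not at hlt
      have k := key (M r) ζ h2.le hlt.le
      have hp : 0 < h (M r / 2) := Real.sqrt_pos.1 p
      have hle : h (M r / 2) ≤ h (M r) := by
        apply h_mono
        · simp only [Set.mem_Ici]; linarith
        · exact h2.le
        · linarith
      have := mul_pos (sub_pos.2 hlt) (hp.trans_le hle)
      linarith
    simp only [Pi.inv_apply]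
    rw [hq, hgInv, hgr.csSup_eq, e]
end

section
/- Let γ > 0 and let L : [0,1] → [0,∞) be a non-decreasing function satisfying L(v) ≥ γ v for all v ∈ [0,1] and lim_{δ↓0} L(δ)/δ = γ. Fix t ∈ (0,1] and for δ ∈ (0,t) define ũ(δ) := sup{v ∈ [0,t] : L(v) ≤ γ δ}. Then ũ(δ)/δ → 1 and L(ũ(δ))/δ → γ as δ ↓ 0. -/
open Set Filter

/-- Pathwise content of Lemma 7.10 (temp_tilde_u) and (conv_Lu): if
`L : [0,1] → [0,∞)` is non-decreasing with `L(v) ≥ γ v` and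
`L(δ)/δ → γ` as `δ ↓ 0`, and `ũ(δ) = sup {v ∈ [0,t] : L(v) ≤ γ δ}` for a
fixed `t ∈ (0,1]`, then `ũ(δ)/δ → 1` and `L(ũ(δ))/δ → γ` as `δ ↓ 0`. -/
theorem tilde_u_convergence
    (γ : ℝ) (hγ : 0 < γ)
    (L : ℝ → ℝ)
    (hL_nonneg : ∀ v ∈ Set.Icc (0:ℝ) 1, 0 ≤ L v)
    (hL_mono : MonotoneOn L (Set.Icc 0 1))
    (hL_ge : ∀ v ∈ Set.Icc (0:ℝ) 1, γ * v ≤ L v)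
    (hL_lim : Tendsto (fun δ => L δ / δ) (nhdsWithin 0 (Set.Ioi 0)) (nhds γ))
    (t : ℝ) (ht : t ∈ Set.Ioc (0:ℝ) 1)
    (uu : ℝ → ℝ)
    (huu : ∀ δ, uu δ = sSup {v | v ∈ Set.Icc 0 t ∧ L v ≤ γ * δ}) :
    Tendsto (fun δ => uu δ / δ) (nhdsWithin 0 (Set.Ioi 0)) (nhds 1) ∧
    Tendsto (fun δ => L (uu δ) / δ) (nhdsWithin 0 (Set.Ioi 0)) (nhds γ) := by
  obtain ⟨ht0, ht1⟩ := ht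
  have hpos : ∀ᶠ δ : ℝ in nhdsWithin 0 (Set.Ioi 0), 0 < δ := self_mem_nhdsWithin
  have hle : ∀ δ : ℝ, 0 < δ → uu δ ≤ δ := by
    intro δ hδ
    rw [huu]
    apply Real.sSup_le _ hδ.le
    rintro v ⟨⟨hv0, hvt⟩, hv⟩
    exact le_of_mul_le_mul_left ((hL_ge v ⟨hv0, hvt.trans ht1⟩).trans hv) hγ
  have hge : ∀ c : ℝ, 0 < c → c < 1 →
      ∀ᶠ δ : ℝ in nhdsWithin 0 (Set.Ioi 0), c * δ ≤ uu δ := by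
    intro c hc hc1
    have hlt : γ < γ / c := by
      rw [lt_div_iff₀ hc]; nlinarith
    have hmul : Tendsto (fun δ : ℝ => c * δ) (nhdsWithin 0 (Set.Ioi 0))
        (nhdsWithin 0 (Set.Ioi 0)) := by
      apply tendsto_nhdsWithin_of_tendsto_nhds_of_eventually_within
      · have h : Tendsto (fun δ : ℝ => c * δ) (nhds 0) (nhds (c * 0)) :=
          (continuous_const.mul continuous_id).tendsto 0
        rw [mul_zero] at h
        exact h.mono_left nhdsWithin_le_nhds
      · filter_upwards [hpos] with δ hδ
        exact mul_pos hc hδ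
    have h1 := hmul.eventually (hL_lim.eventually (gt_mem_nhds hlt))
    have h2 : ∀ᶠ δ : ℝ in nhdsWithin 0 (Set.Ioi 0), δ < t :=
      nhdsWithin_le_nhds (gt_mem_nhds ht0)
    filter_upwards [h1, h2, hpos] with δ h1 h2 h0
    have hcd : 0 < c * δ := mul_pos hc h0
    rw [huu]
    apply le_csSup ⟨t, fun v hv => hv.1.2⟩
    refine ⟨⟨hcd.le, by nlinarith⟩, ?_⟩
    rw [div_lt_iff₀ hcd] at h1
    have : γ / c * (c * δ) = γ * δ := by field_simp
    linarith
  have hA : Tendsto (fun δ => uu δ / δ) (nhdsWithin 0 (Set.Ioi 0)) (nhds 1) := by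
    rw [tendsto_order]
    constructor
    · intro a ha
      obtain ⟨c, hc, hc1⟩ := exists_between (max_lt ha one_pos)
      filter_upwards [hge c ((le_max_right _ _).trans_lt hc) hc1, hpos] with δ h h0
      exact ((le_max_left _ _).trans_lt hc).trans_le ((le_div_iff₀ h0).2 h)
    · intro a ha
      filter_upwards [hpos] with δ h0
      exact ((div_le_one h0).2 (hle δ h0)).trans_lt ha
  have hup : ∀ᶠ δ : ℝ in nhdsWithin 0 (Set.Ioi 0), 0 < uu δ := by
    filter_upwards [hge (1/2) (by norm_num) (by norm_num), hpos] with δ h h0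
    linarith
  have hu0 : Tendsto uu (nhdsWithin 0 (Set.Ioi 0)) (nhdsWithin 0 (Set.Ioi 0)) := by
    apply tendsto_nhdsWithin_of_tendsto_nhds_of_eventually_within _ _ hup
    refine tendsto_of_tendsto_of_tendsto_of_le_of_le' tendsto_const_nhds
      (tendsto_id.mono_left nhdsWithin_le_nhds) (hup.mono fun _ h => h.le)
      (hpos.mono fun δ h => hle δ h)
  refine ⟨hA, ?_⟩
  have hB := (hL_lim.comp hu0).mul hA
  rw [mul_one] at hB
  refine hB.congr' ?_
  filter_upwards [hup, hpos] with δ h h0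
  simp only [Function.comp]
  field_simp
end

section
/- Let α₀, α₁, β₁ > 0 and let γ ≥ α₁ β₁ / 8 (condition [D] of the paper). Then the function ĝ(ζ) = γ α₀ ζ² + α₁ log(α₀ β₁ ζ² + 1) is convex on ℝ (in particular on [0,∞)). -/
/-- Under condition [D] of the paper, `γ ≥ α₁ β₁ / 8`, the effective
market-impact cost function `ĝ(ζ) = γ α₀ ζ² + α₁ log(α₀ β₁ ζ² + 1)` is convex
on ℝ (in particular on `[0,∞)`). -/
theorem ghat_convex
    (α₀ α₁ β₁ γ : ℝ) (hα₀ : 0 < α₀) (hα₁ : 0 < α₁) (hβ₁ : 0 < β₁)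
    (hγ : α₁ * β₁ / 8 ≤ γ) :
    ConvexOn ℝ Set.univ
      (fun ζ : ℝ => γ * α₀ * ζ ^ 2 + α₁ * Real.log (α₀ * β₁ * ζ ^ 2 + 1)) := by
  have hpos : ∀ x : ℝ, 0 < α₀ * β₁ * x ^ 2 + 1 := fun x => by positivity
  have hq : ∀ x : ℝ, HasDerivAt (fun ζ : ℝ => α₀ * β₁ * ζ ^ 2 + 1) (2 * (α₀ * β₁) * x) x := by
    intro x
    have h := ((hasDerivAt_pow 2 x).const_mul (α₀ * β₁)).add_const 1
    refine h.congr_deriv ?_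
    simp only [Nat.cast_ofNat, Nat.add_one_sub_one, pow_one]
    ring
  refine convexOn_of_hasDerivWithinAt2_nonneg convex_univ
    (f' := fun x => 2 * γ * α₀ * x + α₁ * (2 * (α₀ * β₁) * x / (α₀ * β₁ * x ^ 2 + 1)))
    (f'' := fun x => 2 * γ * α₀ + α₁ * ((2 * (α₀ * β₁) * (α₀ * β₁ * x ^ 2 + 1)
      - 2 * (α₀ * β₁) * x * (2 * (α₀ * β₁) * x)) / (α₀ * β₁ * x ^ 2 + 1) ^ 2))
    ?_ ?_ ?_ ?_
  · apply Continuous.continuousOn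
    have : Continuous fun ζ : ℝ => Real.log (α₀ * β₁ * ζ ^ 2 + 1) :=
      Continuous.log (by fun_prop) fun x => (hpos x).ne'
    fun_prop
  · intro x _
    apply HasDerivAt.hasDerivWithinAt
    have h := ((hasDerivAt_pow 2 x).const_mul (γ * α₀)).add
      (((hq x).log (hpos x).ne').const_mul α₁)
    refine h.congr_deriv ?_
    simp only [Nat.cast_ofNat, Nat.add_one_sub_one, pow_one]
    ring
  · intro x _
    apply HasDerivAt.hasDerivWithinAt
    have h1 : ∀ c : ℝ, HasDerivAt (fun y : ℝ => c * y) c x := fun c => by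
      simpa using (hasDerivAt_id x).const_mul c
    exact (h1 _).add ((((h1 _).div (hq x) (hpos x).ne')).const_mul α₁)
  · intro x _
    have hp := hpos x
    have key : -(α₀ * β₁ / 4) ≤ (2 * (α₀ * β₁) * (α₀ * β₁ * x ^ 2 + 1)
      - 2 * (α₀ * β₁) * x * (2 * (α₀ * β₁) * x)) / (α₀ * β₁ * x ^ 2 + 1) ^ 2 := by
      rw [le_div_iff₀ (by positivity)]
      have : 0 ≤ (α₀ * β₁) * (α₀ * β₁ * x ^ 2 - 3) ^ 2 := by positivity
      linarith
    have h1 := mul_le_mul_of_nonneg_left key hα₁.le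
    have h2 := mul_le_mul_of_nonneg_right hγ hα₀.le
    linarith
end

section
/- Fix Φ₀ > 0, let D = ℝ × [0,Φ₀] × [0,∞), let u ∈ 𝒞, and let c ≥ 0 be a constant. Define Ju : D → [0,∞) by Ju(w,φ,s) = sup_{ψ∈[0,φ]} u(w + ((1 − e^{−cψ})/c) s, φ − ψ, s e^{−cψ}) when c > 0, and Ju(w,φ,s) = sup_{ψ∈[0,φ]} u(w + ψ s, φ − ψ, s) when c = 0. Then: (a) Ju(w,φ,s) ≥ u(w,φ,s) for all (w,φ,s) ∈ D; (b) Ju is continuous on D; (c) Ju is non-decreasing in each of the three variables; and (d) Ju satisfies a polynomial growth bound: there exist constants C′, m′ > 0 with Ju(w,φ,s) ≤ C′(1 + |w|^{m′} + s^{m′}) on D. In particular Ju ∈ 𝒞. -/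
open Set Real

/-- The operator `J` of Theorem 2.1(ii) (with `c = γ h(∞)`): the utility of
liquidating `ψ ∈ [0,φ]` shares by an infinitely divided block trade in
infinitesimal time. -/
noncomputable def Ju (c : ℝ) (u : ℝ → ℝ → ℝ → ℝ) (w φ s : ℝ) : ℝ :=
  if c = 0 then
    sSup ((fun ψ => u (w + ψ * s) (φ - ψ) s) '' Set.Icc 0 φ)
  else
    sSup ((fun ψ =>
      u (w + ((1 - Real.exp (-(c * ψ))) / c) * s) (φ - ψ) (s * Real.exp (-(c * ψ)))) ''
        Set.Icc 0 φ)

/-- Common form of the two branches of `Ju`. -/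
noncomputable def JAux (a b : ℝ → ℝ) (u : ℝ → ℝ → ℝ → ℝ) (w φ s : ℝ) : ℝ :=
  sSup ((fun ψ => u (w + a ψ * s) (φ - ψ) (s * b ψ)) '' Set.Icc 0 φ)

lemma JAux_growth {Φ₀ : ℝ} (hΦ₀ : 0 < Φ₀) {u : ℝ → ℝ → ℝ → ℝ} {Cu mu : ℝ} (hCu : 0 < Cu)
    (hmu : 0 < mu) (hu : MemC Φ₀ u Cu mu) {a b : ℝ → ℝ}
    (ha : ∀ ψ, 0 ≤ ψ → 0 ≤ a ψ ∧ a ψ ≤ ψ) (hb : ∀ ψ, 0 ≤ ψ → 0 ≤ b ψ ∧ b ψ ≤ 1)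
    (w φ s ψ : ℝ) (hφ : φ ∈ Set.Icc 0 Φ₀) (hs : 0 ≤ s) (hψ : ψ ∈ Set.Icc 0 φ) :
    u (w + a ψ * s) (φ - ψ) (s * b ψ) ≤
      Cu * (1 + 2 ^ mu + 2 ^ mu * Φ₀ ^ mu) * (1 + |w| ^ mu + s ^ mu) := by
  obtain ⟨h0, h1⟩ := hφ
  obtain ⟨h2, h3⟩ := hψ
  obtain ⟨a0, a1⟩ := ha ψ h2
  obtain ⟨b0, b1⟩ := hb ψ h2
  have hsb : 0 ≤ s * b ψ := mul_nonneg hs b0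
  have hsb' : s * b ψ ≤ s := mul_le_of_le_one_right hs b1
  refine (hu.growth _ _ _ ⟨by linarith, by linarith⟩ hsb).trans ?_
  rw [mul_assoc]
  refine mul_le_mul_of_nonneg_left ?_ hCu.le
  have e1 : (s * b ψ) ^ mu ≤ s ^ mu := Real.rpow_le_rpow hsb hsb' hmu.le
  have e2 : |w + a ψ * s| ≤ 2 * max |w| (Φ₀ * s) := by
    have : |w + a ψ * s| ≤ |w| + Φ₀ * s := by
      refine (abs_add_le _ _).trans ?_
      rw [abs_of_nonneg (mul_nonneg a0 hs)]
      have := mul_le_mul_of_nonneg_right (show a ψ ≤ Φ₀ by linarith) hs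
      linarith
    linarith [le_max_left |w| (Φ₀ * s), le_max_right |w| (Φ₀ * s)]
  have hW : 0 ≤ |w| ^ mu := by positivity
  have hS : 0 ≤ s ^ mu := by positivity
  have hP : 0 < Φ₀ ^ mu := by positivity
  have hT : (0 : ℝ) < 2 ^ mu := by positivity
  have e3 : |w + a ψ * s| ^ mu ≤ 2 ^ mu * (|w| ^ mu + Φ₀ ^ mu * s ^ mu) := by
    refine (Real.rpow_le_rpow (abs_nonneg _) e2 hmu.le).trans ?_
    rw [Real.mul_rpow (by norm_num) (le_max_of_le_left (abs_nonneg w))]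
    refine mul_le_mul_of_nonneg_left ?_ hT.le
    rcases max_choice |w| (Φ₀ * s) with h | h <;> rw [h]
    · have : 0 ≤ Φ₀ ^ mu * s ^ mu := by positivity
      linarith
    · rw [Real.mul_rpow hΦ₀.le hs]; linarith
  have p1 : 0 ≤ 2 ^ mu * Φ₀ ^ mu := by positivity
  have p2 : 0 ≤ 2 ^ mu * Φ₀ ^ mu * |w| ^ mu := by positivity
  have p3 : 0 ≤ 2 ^ mu * s ^ mu := by positivity
  nlinarith

lemma JAux_bdd {Φ₀ : ℝ} (hΦ₀ : 0 < Φ₀) {u : ℝ → ℝ → ℝ → ℝ} {Cu mu : ℝ} (hCu : 0 < Cu)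
    (hmu : 0 < mu) (hu : MemC Φ₀ u Cu mu) {a b : ℝ → ℝ}
    (ha : ∀ ψ, 0 ≤ ψ → 0 ≤ a ψ ∧ a ψ ≤ ψ) (hb : ∀ ψ, 0 ≤ ψ → 0 ≤ b ψ ∧ b ψ ≤ 1)
    (w φ s : ℝ) (hφ : φ ∈ Set.Icc 0 Φ₀) (hs : 0 ≤ s) (ψ : ℝ) (hψ : ψ ∈ Set.Icc 0 φ) :
    u (w + a ψ * s) (φ - ψ) (s * b ψ) ≤ JAux a b u w φ s := by
  refine le_csSup
    ⟨Cu * (1 + 2 ^ mu + 2 ^ mu * Φ₀ ^ mu) * (1 + |w| ^ mu + s ^ mu), ?_⟩ (Set.mem_image_of_mem _ hψ)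
  rintro _ ⟨ψ, hψ, rfl⟩
  exact JAux_growth hΦ₀ hCu hmu hu ha hb w φ s ψ hφ hs hψ

lemma JAux_le {a b : ℝ → ℝ} {u : ℝ → ℝ → ℝ → ℝ} {w φ s M : ℝ} (hφ : 0 ≤ φ)
    (h : ∀ ψ ∈ Set.Icc 0 φ, u (w + a ψ * s) (φ - ψ) (s * b ψ) ≤ M) :
    JAux a b u w φ s ≤ M := by
  refine csSup_le ((Set.nonempty_Icc.2 hφ).image _) ?_
  rintro _ ⟨ψ, hψ, rfl⟩
  exact h ψ hψ

lemma JAux_cont {Φ₀ : ℝ} {u : ℝ → ℝ → ℝ → ℝ} {Cu mu : ℝ}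
    (hu : MemC Φ₀ u Cu mu) {a b : ℝ → ℝ} (hac : Continuous a) (hbc : Continuous b)
    (hb : ∀ ψ, 0 ≤ ψ → 0 ≤ b ψ ∧ b ψ ≤ 1) :
    ContinuousOn (fun p : ℝ × ℝ × ℝ => JAux a b u p.1 p.2.1 p.2.2)
      {p : ℝ × ℝ × ℝ | p.2.1 ∈ Set.Icc 0 Φ₀ ∧ 0 ≤ p.2.2} := by
  rw [continuousOn_iff_continuous_domRestrict]
  set D : Set (ℝ × ℝ × ℝ) := {p : ℝ × ℝ × ℝ | p.2.1 ∈ Set.Icc 0 Φ₀ ∧ 0 ≤ p.2.2} with hD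
  let k : ℝ → ℝ := fun t => max 0 (min t 1)
  have hk : Continuous k := by fun_prop
  have hk0 : ∀ t, 0 ≤ k t := fun t => le_max_left _ _
  have hk1 : ∀ t, k t ≤ 1 := fun t => max_le zero_le_one (min_le_right _ _)
  let f : D → ℝ → ℝ := fun p t =>
    u (p.1.1 + a (k t * p.1.2.1) * p.1.2.2) (p.1.2.1 - k t * p.1.2.1)
      (p.1.2.2 * b (k t * p.1.2.1))
  have hf : Continuous (Function.uncurry f) := by
    have g : Continuous (fun q : D × ℝ =>
      ((q.1.1.1 + a (k q.2 * q.1.1.2.1) * q.1.1.2.2, q.1.1.2.1 - k q.2 * q.1.1.2.1,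
        q.1.1.2.2 * b (k q.2 * q.1.1.2.1)) : ℝ × ℝ × ℝ)) := by fun_prop
    refine hu.continuousOn.comp_continuous g ?_
    rintro ⟨⟨⟨w, φ, s⟩, ⟨h0, h1⟩, hs⟩, t⟩
    simp only at h0 h1 hs
    have q0 : 0 ≤ k t * φ := mul_nonneg (hk0 t) h0
    have q1 : k t * φ ≤ φ := mul_le_of_le_one_left h0 (hk1 t)
    refine ⟨⟨?_, ?_⟩, ?_⟩
    · change 0 ≤ φ - k t * φ
      linarith
    · change φ - k t * φ ≤ Φ₀
      linarith
    · exact mul_nonneg hs (hb _ q0).1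
  have := (isCompact_Icc (a := (0 : ℝ)) (b := 1)).continuous_sSup (f := f) hf
  refine this.congr ?_
  rintro ⟨⟨w, φ, s⟩, ⟨h0, h1⟩, hs⟩
  simp only at h0 h1 hs
  change sSup _ = sSup _
  congr 1
  ext y
  constructor
  · rintro ⟨t, ht, rfl⟩
    exact ⟨k t * φ, ⟨mul_nonneg (hk0 t) h0, mul_le_of_le_one_left h0 (hk1 t)⟩, rfl⟩
  · rintro ⟨ψ, ⟨hψ0, hψ1⟩, rfl⟩
    have l0 : 0 ≤ ψ / φ := div_nonneg hψ0 h0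
    have l1 : ψ / φ ≤ 1 := div_le_one_of_le₀ hψ1 h0
    refine ⟨ψ / φ, ⟨l0, l1⟩, ?_⟩
    have hkk : k (ψ / φ) * φ = ψ := by
      have : k (ψ / φ) = ψ / φ := by
        change max 0 (min (ψ / φ) 1) = _
        rw [min_eq_left l1, max_eq_right l0]
      rw [this]
      rcases h0.eq_or_lt with h | h
      · have hle : ψ ≤ φ := hψ1
        have hz : ψ = 0 := by linarith
        rw [hz]; simp
      · field_simp
    change u (w + a (k (ψ / φ) * φ) * s) (φ - k (ψ / φ) * φ) (s * b (k (ψ / φ) * φ)) = _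
    rw [hkk]

lemma JAux_mem {Φ₀ : ℝ} (hΦ₀ : 0 < Φ₀) {u : ℝ → ℝ → ℝ → ℝ} {Cu mu : ℝ} (hCu : 0 < Cu)
    (hmu : 0 < mu) (hu : MemC Φ₀ u Cu mu) {a b : ℝ → ℝ} (hac : Continuous a) (hbc : Continuous b)
    (ha : ∀ ψ, 0 ≤ ψ → 0 ≤ a ψ ∧ a ψ ≤ ψ) (hb : ∀ ψ, 0 ≤ ψ → 0 ≤ b ψ ∧ b ψ ≤ 1)
    (hb0 : b 0 = 1) :
    (∀ w φ s, φ ∈ Set.Icc 0 Φ₀ → 0 ≤ s → u w φ s ≤ JAux a b u w φ s) ∧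
    ∃ C' m' : ℝ, 0 < C' ∧ 0 < m' ∧ MemC Φ₀ (JAux a b u) C' m' := by
  have ha0 : a 0 = 0 := le_antisymm (ha 0 le_rfl).2 (ha 0 le_rfl).1
  have key : ∀ w φ s, φ ∈ Set.Icc 0 Φ₀ → 0 ≤ s → u w φ s ≤ JAux a b u w φ s := by
    intro w φ s hφ hs
    simpa [ha0, hb0] using JAux_bdd hΦ₀ hCu hmu hu ha hb w φ s hφ hs 0 ⟨le_rfl, hφ.1⟩
  refine ⟨key, Cu * (1 + 2 ^ mu + 2 ^ mu * Φ₀ ^ mu), mu, by positivity, hmu, ?_⟩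
  refine ⟨?_, JAux_cont hu hac hbc hb, ?_, ?_, ?_, ?_⟩
  · intro w φ s hφ hs
    exact (hu.nonneg w φ s hφ hs).trans (key w φ s hφ hs)
  · intro w₁ w₂ φ s hw hφ hs
    refine JAux_le hφ.1 fun ψ hψ => ?_
    refine le_trans ?_ (JAux_bdd hΦ₀ hCu hmu hu ha hb w₂ φ s hφ hs ψ hψ)
    exact hu.mono_w _ _ _ _ (by linarith) ⟨by linarith [hψ.2], by linarith [hψ.1, hφ.2]⟩
      (mul_nonneg hs (hb ψ hψ.1).1)
  · intro w φ₁ φ₂ s h hφ₁ hφ₂ hs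
    refine JAux_le hφ₁.1 fun ψ hψ => ?_
    refine le_trans ?_ (JAux_bdd hΦ₀ hCu hmu hu ha hb w φ₂ s hφ₂ hs ψ ⟨hψ.1, hψ.2.trans h⟩)
    exact hu.mono_phi _ _ _ _ (by linarith) ⟨by linarith [hψ.2], by linarith [hψ.1, hφ₁.2]⟩
      ⟨by linarith [hψ.2], by linarith [hψ.1, hφ₂.2]⟩ (mul_nonneg hs (hb ψ hψ.1).1)
  · intro w φ s₁ s₂ h hφ hs
    refine JAux_le hφ.1 fun ψ hψ => ?_
    refine le_trans ?_ (JAux_bdd hΦ₀ hCu hmu hu ha hb w φ s₂ hφ (hs.trans h) ψ hψ)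
    have hmem : φ - ψ ∈ Set.Icc 0 Φ₀ := ⟨by linarith [hψ.2], by linarith [hψ.1, hφ.2]⟩
    have hb' := (hb ψ hψ.1).1
    have h1 := mul_le_mul_of_nonneg_left h (ha ψ hψ.1).1
    exact (hu.mono_w _ _ _ _ (by linarith) hmem (mul_nonneg hs hb')).trans
      (hu.mono_s _ _ _ _ (mul_le_mul_of_nonneg_right h hb') hmem (mul_nonneg hs hb'))
  · intro w φ s hφ hs
    exact JAux_le hφ.1 fun ψ hψ => JAux_growth hΦ₀ hCu hmu hu ha hb w φ s ψ hφ hs hψ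

/-- Properties of `Ju`: (a) `Ju ≥ u` on `D`; and `Ju` is non-negative,
continuous on `D`, non-decreasing in each variable, and of polynomial growth,
i.e. `Ju ∈ 𝒞`. -/
theorem Ju_mem_C
    (Φ₀ : ℝ) (hΦ₀ : 0 < Φ₀)
    (u : ℝ → ℝ → ℝ → ℝ) (Cu mu : ℝ) (hCu : 0 < Cu) (hmu : 0 < mu)
    (hu : MemC Φ₀ u Cu mu)
    (c : ℝ) (hc : 0 ≤ c) :
    (∀ w φ s, φ ∈ Set.Icc 0 Φ₀ → 0 ≤ s → u w φ s ≤ Ju c u w φ s) ∧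
    ∃ C' m' : ℝ, 0 < C' ∧ 0 < m' ∧ MemC Φ₀ (Ju c u) C' m' := by
  by_cases h : c = 0
  · have e : Ju c u = JAux (fun ψ => ψ) (fun _ => 1) u := by
      funext w φ s
      simp [Ju, JAux, h]
    rw [e]
    exact JAux_mem hΦ₀ hCu hmu hu continuous_id continuous_const
      (fun ψ hψ => ⟨hψ, le_rfl⟩) (fun ψ _ => ⟨zero_le_one, le_rfl⟩) rfl
  · have hc' : 0 < c := lt_of_le_of_ne hc (Ne.symm h)
    have e : Ju c u = JAux (fun ψ => (1 - Real.exp (-(c * ψ))) / c)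
        (fun ψ => Real.exp (-(c * ψ))) u := by
      funext w φ s
      simp only [Ju, JAux, if_neg h]
    rw [e]
    have hexp : ∀ ψ, 0 ≤ ψ → Real.exp (-(c * ψ)) ≤ 1 := fun ψ hψ =>
      Real.exp_le_one_iff.2 (by have := mul_nonneg hc hψ; linarith)
    refine JAux_mem hΦ₀ hCu hmu hu (by fun_prop) (by fun_prop) (fun ψ hψ => ⟨?_, ?_⟩)
      (fun ψ hψ => ⟨(Real.exp_pos _).le, hexp ψ hψ⟩) (by simp)
    · exact div_nonneg (by linarith [hexp ψ hψ]) hc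
    · rw [div_le_iff₀ hc']
      have := Real.add_one_le_exp (-(c * ψ))
      linarith
end
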